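/- Upper bound of the smoothed max-relative entropy by the hypothesis testing divergence: For all states ρ, σ on ℂ^d and all ε ∈ (0,1), D_max^ε(ρ‖σ) ≤ D_H^{1−ε²}(ρ‖σ) − log(1 − ε²) in the extended reals. -/

import Mathlib

open scoped Kronecker ComplexOrder

noncomputable section

namespace QCD

attribute [local instance] Classical.propDecidable

variable {n m : Type} [Fintype n] [DecidableEq n] [Fintype m] [DecidableEq m]

/-- The real part of the trace of a complex matrix. -/
def rtr (A : Matrix n n ℂ) : ℝ := (A.trace).re

/-- A quantum state: positive semidefinite with trace one. -/
def IsState (ρ : Matrix n n ℂ) : Prop := ρ.PosSemidef ∧ ρ.trace = 1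

/-- Loewner order: `A ≤ B` iff `B - A` is positive semidefinite. -/
def loewnerLE (A B : Matrix n n ℂ) : Prop := (B - A).PosSemidef

/-- Support containment (for PSD matrices): `ker σ ⊆ ker ρ`. -/
def SuppLE (ρ σ : Matrix n n ℂ) : Prop := ∀ v : n → ℂ, σ.mulVec v = 0 → ρ.mulVec v = 0

/-- Functional calculus for Hermitian matrices (junk value `0` otherwise). -/
def matFun (f : ℝ → ℝ) (A : Matrix n n ℂ) : Matrix n n ℂ :=
  if hA : A.IsHermitian then
    (hA.eigenvectorUnitary : Matrix n n ℂ) *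
      Matrix.diagonal (fun i => (f (hA.eigenvalues i) : ℂ)) *
      (star (hA.eigenvectorUnitary : Matrix n n ℂ))
  else 0

/-- Matrix square root via functional calculus. -/
def msqrt (A : Matrix n n ℂ) : Matrix n n ℂ := matFun Real.sqrt A

/-- Matrix real power taken on the support (`0 ^ t := 0`). -/
def mpow (A : Matrix n n ℂ) (t : ℝ) : Matrix n n ℂ :=
  matFun (fun x => if x = 0 then 0 else x ^ t) A

/-- Matrix base-2 logarithm on the support. -/
def mlog (A : Matrix n n ℂ) : Matrix n n ℂ := matFun (Real.logb 2) A

/-- Positive part of a Hermitian matrix. -/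
def mposPart (A : Matrix n n ℂ) : Matrix n n ℂ := matFun (fun x => max x 0) A

/-- Trace norm. -/
def traceNorm (A : Matrix n m ℂ) : ℝ := rtr (msqrt (A.conjTranspose * A))

/-- Base-2 logarithm as an extended real (`⊥` on nonpositive input). -/
def elog (x : ℝ) : EReal := if x ≤ 0 then ⊥ else ((Real.logb 2 x : ℝ) : EReal)

/-- Base-2 logarithm of an extended real. -/
def elogE (x : EReal) : EReal := if x = ⊤ then ⊤ else elog x.toReal

/-- `2 ^ x` for an extended real `x`. -/
def epow2 (x : EReal) : EReal :=
  if x = ⊤ then ⊤ else if x = ⊥ then 0 else ((((2:ℝ) ^ x.toReal : ℝ)) : EReal)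

/-- Umegaki relative entropy (base 2), `⊤` if the support condition fails. -/
def relEntropy (ρ σ : Matrix n n ℂ) : EReal :=
  if SuppLE ρ σ then ((rtr (ρ * (mlog ρ - mlog σ)) : ℝ) : EReal) else ⊤

/-- Petz–Rényi divergence (base 2). -/
def petzRenyi (α : ℝ) (ρ σ : Matrix n n ℂ) : EReal :=
  if 1 < α ∧ ¬ SuppLE ρ σ then ⊤
  else (((α - 1)⁻¹ : ℝ) : EReal) * elog (rtr (mpow ρ α * mpow σ (1 - α)))

/-- Geometric (maximal) Rényi divergence (base 2). -/
def geomRenyi (α : ℝ) (ρ σ : Matrix n n ℂ) : EReal :=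
  if SuppLE ρ σ then
    (((α - 1)⁻¹ : ℝ) : EReal) *
      elog (rtr (σ * mpow (mpow σ (-(1/2 : ℝ)) * ρ * mpow σ (-(1/2 : ℝ))) α))
  else ⊤

/-- Max-relative entropy (base 2). -/
def dMax (ρ σ : Matrix n n ℂ) : EReal :=
  sInf {x : EReal | ∃ lam : ℝ, x = (lam : EReal) ∧ loewnerLE ρ ((((2:ℝ) ^ lam : ℝ) : ℂ) • σ)}

/-- Uhlmann fidelity. -/
def fidelity (ρ σ : Matrix n n ℂ) : ℝ := (rtr (msqrt (msqrt σ * ρ * msqrt σ))) ^ 2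

/-- Sine (purified) distance. -/
def sineDist (ρ σ : Matrix n n ℂ) : ℝ := Real.sqrt (1 - fidelity ρ σ)

/-- Smoothed max-relative entropy: smoothing over states in the sine-distance ball. -/
def dMaxSmooth (δ : ℝ) (ρ σ : Matrix n n ℂ) : EReal :=
  ⨅ (ρ' : Matrix n n ℂ) (_ : IsState ρ' ∧ sineDist ρ ρ' ≤ δ), dMax ρ' σ

/-- Hypothesis testing divergence (base 2). -/
def dH (ε : ℝ) (ρ σ : Matrix n n ℂ) : EReal :=
  - elog (sInf {x : ℝ | ∃ T : Matrix n n ℂ,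
      T.PosSemidef ∧ ((1 : Matrix n n ℂ) - T).PosSemidef ∧ 1 - ε ≤ rtr (T * ρ) ∧ x = rtr (T * σ)})

/-- The quantity `c_γ(ρ‖σ)`. -/
def cGamma (γ : ℝ) (ρ σ : Matrix n n ℂ) : EReal :=
  ((γ⁻¹ : ℝ) : EReal) *
    elogE (epow2 ((γ : ℝ) * petzRenyi (1 + γ) ρ σ) +
           epow2 (((-γ : ℝ) : EReal) * petzRenyi (1 - γ) ρ σ) + 1)

/-- Binary entropy (base 2). -/
def binEnt (x : ℝ) : ℝ := -(x * Real.logb 2 x) - (1 - x) * Real.logb 2 (1 - x)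

/-- Action of `id_k ⊗ Φ` on block matrices. -/
def blockApply {k : Type} (Φ : Matrix n n ℂ →ₗ[ℂ] Matrix m m ℂ)
    (M : Matrix (k × n) (k × n) ℂ) : Matrix (k × m) (k × m) ℂ :=
  Matrix.of fun p q => Φ (Matrix.of fun a b => M (p.1, a) (q.1, b)) p.2 q.2

/-- Action of `Φ ⊗ id_k` on block matrices. -/
def blockApplyRight {k : Type} (Φ : Matrix n n ℂ →ₗ[ℂ] Matrix m m ℂ)
    (M : Matrix (n × k) (n × k) ℂ) : Matrix (m × k) (m × k) ℂ :=
  Matrix.of fun p q => Φ (Matrix.of fun a b => M (a, p.2) (b, q.2)) p.1 q.1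

/-- Quantum channel: trace preserving and completely positive. -/
def IsQChannel (Φ : Matrix n n ℂ →ₗ[ℂ] Matrix m m ℂ) : Prop :=
  (∀ M : Matrix n n ℂ, (Φ M).trace = M.trace) ∧
  (∀ k : ℕ, 1 ≤ k → ∀ M : Matrix (Fin k × n) (Fin k × n) ℂ, M.PosSemidef →
    (blockApply Φ M).PosSemidef)

/-- `id_k ⊗ Φ` as a linear map. -/
def blockApplyL (k : Type) (Φ : Matrix n n ℂ →ₗ[ℂ] Matrix m m ℂ) :
    Matrix (k × n) (k × n) ℂ →ₗ[ℂ] Matrix (k × m) (k × m) ℂ where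
  toFun := blockApply Φ
  map_add' M N := by
    ext p q
    show Φ (Matrix.of fun a b => (M + N) (p.1, a) (q.1, b)) p.2 q.2 = _
    have h : (Matrix.of fun a b => (M + N) (p.1, a) (q.1, b)) =
        (Matrix.of fun a b => M (p.1, a) (q.1, b)) +
          (Matrix.of fun a b => N (p.1, a) (q.1, b)) := rfl
    rw [h, map_add]
    rfl
  map_smul' c M := by
    ext p q
    show Φ (Matrix.of fun a b => (c • M) (p.1, a) (q.1, b)) p.2 q.2 = _
    have h : (Matrix.of fun a b => (c • M) (p.1, a) (q.1, b)) =
        c • (Matrix.of fun a b => M (p.1, a) (q.1, b)) := rfl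
    rw [h, map_smul]
    rfl

/-- `Φ ⊗ id_k` as a linear map. -/
def blockApplyRightL (k : Type) (Φ : Matrix n n ℂ →ₗ[ℂ] Matrix m m ℂ) :
    Matrix (n × k) (n × k) ℂ →ₗ[ℂ] Matrix (m × k) (m × k) ℂ where
  toFun := blockApplyRight Φ
  map_add' M N := by
    ext p q
    show Φ (Matrix.of fun a b => (M + N) (a, p.2) (b, q.2)) p.1 q.1 = _
    have h : (Matrix.of fun a b => (M + N) (a, p.2) (b, q.2)) =
        (Matrix.of fun a b => M (a, p.2) (b, q.2)) +
          (Matrix.of fun a b => N (a, p.2) (b, q.2)) := rfl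
    rw [h, map_add]
    rfl
  map_smul' c M := by
    ext p q
    show Φ (Matrix.of fun a b => (c • M) (a, p.2) (b, q.2)) p.1 q.1 = _
    have h : (Matrix.of fun a b => (c • M) (a, p.2) (b, q.2)) =
        c • (Matrix.of fun a b => M (a, p.2) (b, q.2)) := rfl
    rw [h, map_smul]
    rfl

/-- Tensor product of two channels (Kronecker product action). -/
def tensorChannel {n₁ m₁ n₂ m₂ : Type}
    (E₁ : Matrix n₁ n₁ ℂ →ₗ[ℂ] Matrix m₁ m₁ ℂ) (E₂ : Matrix n₂ n₂ ℂ →ₗ[ℂ] Matrix m₂ m₂ ℂ) :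
    Matrix (n₁ × n₂) (n₁ × n₂) ℂ →ₗ[ℂ] Matrix (m₁ × m₂) (m₁ × m₂) ℂ :=
  (blockApplyRightL m₂ E₁).comp (blockApplyL n₁ E₂)

/-- Index type for `k`-fold tensor powers. -/
def tpow (ι : Type) : ℕ → Type
  | 0 => PUnit
  | (k+1) => tpow ι k × ι

def tpowFintype (ι : Type) [Fintype ι] : ∀ k : ℕ, Fintype (tpow ι k)
  | 0 => inferInstanceAs (Fintype PUnit)
  | (k+1) => letI := tpowFintype ι k; inferInstanceAs (Fintype (tpow ι k × ι))

instance (ι : Type) [Fintype ι] (k : ℕ) : Fintype (tpow ι k) := tpowFintype ι k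

def tpowDecEq (ι : Type) [DecidableEq ι] : ∀ k : ℕ, DecidableEq (tpow ι k)
  | 0 => inferInstanceAs (DecidableEq PUnit)
  | (k+1) => letI := tpowDecEq ι k; inferInstanceAs (DecidableEq (tpow ι k × ι))

instance (ι : Type) [DecidableEq ι] (k : ℕ) : DecidableEq (tpow ι k) := tpowDecEq ι k

/-- `k`-fold Kronecker tensor power of a matrix. -/
def tpowMat (ρ : Matrix n n ℂ) : ∀ k : ℕ, Matrix (tpow n k) (tpow n k) ℂ
  | 0 => 1
  | (k+1) => (tpowMat ρ k) ⊗ₖ ρ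

/-- `k`-fold tensor power of a channel. -/
def tpowChannel (Φ : Matrix n n ℂ →ₗ[ℂ] Matrix m m ℂ) :
    ∀ k : ℕ, Matrix (tpow n k) (tpow n k) ℂ →ₗ[ℂ] Matrix (tpow m k) (tpow m k) ℂ
  | 0 => LinearMap.id
  | (k+1) => tensorChannel (tpowChannel Φ k) Φ

/-- Channel divergence induced by a divergence `𝔇` on states:
sup over `k ≥ 1` and input states `ν` on `ℂ^k ⊗ ℂ^d`. -/
def chDiv (𝔇 : ∀ (p : Type) [Fintype p] [DecidableEq p], Matrix p p ℂ → Matrix p p ℂ → EReal)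
    (E F : Matrix n n ℂ →ₗ[ℂ] Matrix m m ℂ) : EReal :=
  ⨆ (k : ℕ) (_ : 1 ≤ k) (ν : Matrix (Fin k × n) (Fin k × n) ℂ) (_ : IsState ν),
    𝔇 (Fin k × m) (blockApply E ν) (blockApply F ν)

/-- The geometric Rényi divergence as a divergence family. -/
def geomD (α : ℝ) : ∀ (p : Type) [Fintype p] [DecidableEq p],
    Matrix p p ℂ → Matrix p p ℂ → EReal :=
  fun _ _ _ => geomRenyi α

/-- The Umegaki relative entropy as a divergence family. -/
def relD : ∀ (p : Type) [Fintype p] [DecidableEq p],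
    Matrix p p ℂ → Matrix p p ℂ → EReal :=
  fun _ _ _ => relEntropy

/-- The hypothesis testing divergence as a divergence family. -/
def dHD (ε : ℝ) : ∀ (p : Type) [Fintype p] [DecidableEq p],
    Matrix p p ℂ → Matrix p p ℂ → EReal :=
  fun _ _ _ => dH ε

/-- Regularized channel relative entropy. -/
def regRelEntropy (E F : Matrix n n ℂ →ₗ[ℂ] Matrix m m ℂ) : EReal :=
  ⨆ (k : ℕ) (_ : 1 ≤ k),
    (((k : ℝ)⁻¹ : ℝ) : EReal) * chDiv relD (tpowChannel E k) (tpowChannel F k)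

end QCD

namespace QCD

open Matrix

section helpers
set_option linter.unusedSectionVars false
variable {n : Type} [Fintype n] [DecidableEq n]

lemma matFun_eq (f : ℝ → ℝ) {A : Matrix n n ℂ} (hA : A.IsHermitian) :
    matFun f A = (hA.eigenvectorUnitary : Matrix n n ℂ) *
      Matrix.diagonal (fun i => (f (hA.eigenvalues i) : ℂ)) *
      (star (hA.eigenvectorUnitary : Matrix n n ℂ)) := by
  rw [matFun, dif_pos hA]

lemma matFun_mul (f g : ℝ → ℝ) {A : Matrix n n ℂ} (hA : A.IsHermitian) :
    matFun f A * matFun g A = matFun (fun x => f x * g x) A := by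
  simp only [matFun_eq _ hA]
  have h : (star (hA.eigenvectorUnitary : Matrix n n ℂ)) *
      (hA.eigenvectorUnitary : Matrix n n ℂ) = 1 := Unitary.coe_star_mul_self _
  set U := (hA.eigenvectorUnitary : Matrix n n ℂ)
  calc _ = U * diagonal (fun i => (f (hA.eigenvalues i) : ℂ)) * (star U * U) *
        diagonal (fun i => (g (hA.eigenvalues i) : ℂ)) * star U := by
        simp only [Matrix.mul_assoc]
    _ = _ := by
      rw [h, Matrix.mul_one, Matrix.mul_assoc U, diagonal_mul_diagonal]
      simp

lemma matFun_add (f g : ℝ → ℝ) {A : Matrix n n ℂ} (hA : A.IsHermitian) :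
    matFun f A + matFun g A = matFun (fun x => f x + g x) A := by
  simp only [matFun_eq _ hA]
  rw [← Matrix.add_mul, ← Matrix.mul_add, diagonal_add]
  simp

lemma matFun_sub (f g : ℝ → ℝ) {A : Matrix n n ℂ} (hA : A.IsHermitian) :
    matFun f A - matFun g A = matFun (fun x => f x - g x) A := by
  simp only [matFun_eq _ hA]
  rw [← Matrix.sub_mul, ← Matrix.mul_sub, diagonal_sub]
  simp

lemma matFun_const (c : ℝ) {A : Matrix n n ℂ} (hA : A.IsHermitian) :
    matFun (fun _ => c) A = (c : ℂ) • (1 : Matrix n n ℂ) := by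
  have h : (hA.eigenvectorUnitary : Matrix n n ℂ) *
      (star (hA.eigenvectorUnitary : Matrix n n ℂ)) = 1 := Unitary.coe_mul_star_self _
  rw [matFun_eq _ hA, ← smul_one_eq_diagonal, Matrix.mul_smul, Matrix.smul_mul, Matrix.mul_one, h]

lemma matFun_id {A : Matrix n n ℂ} (hA : A.IsHermitian) :
    matFun (fun x => x) A = A := by
  rw [matFun_eq _ hA]
  conv_rhs => rw [hA.spectral_theorem]
  rw [Unitary.conjStarAlgAut_apply]
  rfl

lemma matFun_smul (c : ℝ) (f : ℝ → ℝ) {A : Matrix n n ℂ} (hA : A.IsHermitian) :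
    matFun (fun x => c * f x) A = (c : ℂ) • matFun f A := by
  rw [← matFun_mul (fun _ => c) f hA, matFun_const c hA, Matrix.smul_mul, Matrix.one_mul]

lemma matFun_congr {f g : ℝ → ℝ} {A : Matrix n n ℂ} (hA : A.PosSemidef)
    (h : ∀ x, 0 ≤ x → f x = g x) : matFun f A = matFun g A := by
  rw [matFun_eq _ hA.1, matFun_eq _ hA.1]
  simp [h _ (hA.eigenvalues_nonneg _)]

lemma matFun_psd {f : ℝ → ℝ} {A : Matrix n n ℂ} (hA : A.PosSemidef)
    (h : ∀ x, 0 ≤ x → 0 ≤ f x) : (matFun f A).PosSemidef := by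
  rw [matFun_eq _ hA.1]
  refine PosSemidef.mul_mul_conjTranspose_same (PosSemidef.diagonal ?_) _
  intro i
  simpa using h _ (hA.eigenvalues_nonneg _)

lemma matFun_herm (f : ℝ → ℝ) {A : Matrix n n ℂ} (hA : A.IsHermitian) :
    (matFun f A)ᴴ = matFun f A := by
  rw [matFun_eq _ hA]
  simp only [star_eq_conjTranspose, conjTranspose_mul, conjTranspose_conjTranspose,
    diagonal_conjTranspose, Matrix.mul_assoc]
  congr 3
  ext i
  simp

lemma rtr_nonneg {A : Matrix n n ℂ} (hA : A.PosSemidef) : 0 ≤ rtr A :=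
  (Complex.le_def.1 hA.trace_nonneg).1

/-- The trace of a product of positive semidefinite matrices is nonnegative. -/
lemma rtr_mul_nonneg {A B : Matrix n n ℂ} (hA : A.PosSemidef) (hB : B.PosSemidef) :
    0 ≤ rtr (A * B) := by
  have h1 : A = matFun Real.sqrt A * matFun Real.sqrt A := by
    rw [matFun_mul _ _ hA.1, matFun_congr (g := fun x => x) hA, matFun_id hA.1]
    intro x hx
    exact Real.mul_self_sqrt hx
  set R := matFun Real.sqrt A with hR
  have h2 : rtr (A * B) = rtr (R * B * Rᴴ) := by
    rw [hR, matFun_herm _ hA.1, ← hR, h1, rtr, rtr, Matrix.mul_assoc, Matrix.trace_mul_comm]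
  rw [h2]
  exact rtr_nonneg (hB.mul_mul_conjTranspose_same R)

lemma rtr_add (A B : Matrix n n ℂ) : rtr (A + B) = rtr A + rtr B := by simp [rtr]
lemma rtr_sub (A B : Matrix n n ℂ) : rtr (A - B) = rtr A - rtr B := by simp [rtr]
lemma rtr_smul (c : ℝ) (A : Matrix n n ℂ) : rtr ((c : ℂ) • A) = c * rtr A := by simp [rtr]
lemma rtr_comm (A B : Matrix n n ℂ) : rtr (A * B) = rtr (B * A) := by
  simp [rtr, Matrix.trace_mul_comm A B]
lemma rtr_conjT (A : Matrix n n ℂ) : rtr Aᴴ = rtr A := by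
  simp [rtr, trace_conjTranspose]

/-- Pairing of a positive block matrix with a block column. -/
lemma block_pairing {P X Q : Matrix n n ℂ} (h : (fromBlocks P X Xᴴ Q).PosSemidef)
    (A B : Matrix n n ℂ) :
    2 * rtr (X * (B * Aᴴ)) ≤ rtr (P * (A * Aᴴ)) + rtr (Q * (B * Bᴴ)) := by
  have h1 := rtr_nonneg (h.conjTranspose_mul_mul_same (fromRows A (-B)))
  rw [conjTranspose_fromRows_eq_fromCols_conjTranspose, fromCols_mul_fromBlocks,
    fromCols_mul_fromRows] at h1
  have e : (Aᴴ * P + (-B)ᴴ * Xᴴ) * A + (Aᴴ * X + (-B)ᴴ * Q) * (-B)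
      = (Aᴴ * (P * A) - (Aᴴ * (X * B))ᴴ - Aᴴ * (X * B)) + Bᴴ * (Q * B) := by
    simp only [conjTranspose_mul, conjTranspose_neg, conjTranspose_conjTranspose]
    noncomm_ring
  rw [e, rtr_add, rtr_sub, rtr_sub, rtr_conjT, rtr_comm Aᴴ (P * A), rtr_comm Aᴴ (X * B),
    rtr_comm Bᴴ] at h1
  simp only [Matrix.mul_assoc] at h1
  linarith

/-- One half of the semidefinite characterisation of the root fidelity. -/
lemma rtr_le_of_block {P X Q : Matrix n n ℂ} (h : (fromBlocks P X Xᴴ Q).PosSemidef)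
    (hP : P.PosSemidef) (hQ : Q.PosSemidef) :
    rtr X ≤ rtr (msqrt (msqrt Q * P * msqrt Q)) := by
  set R := msqrt Q with hR
  have hRh : Rᴴ = R := matFun_herm _ hQ.1
  have hN : (R * P * R).PosSemidef := by
    have := hP.mul_mul_conjTranspose_same R
    rwa [hRh] at this
  set N := R * P * R with hNdef
  set S := msqrt N with hS
  have hSp : S.PosSemidef := matFun_psd hN fun x _ => Real.sqrt_nonneg x
  have hSS : S * S = N := by
    rw [hS, msqrt, matFun_mul _ _ hN.1, matFun_congr (g := fun x => x) hN, matFun_id hN.1]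
    intro x hx
    exact Real.mul_self_sqrt hx
  -- the key estimate
  have key : ∀ δ : ℝ, 0 < δ → 2 * rtr X ≤ 2 * rtr S + δ * rtr (1 : Matrix n n ℂ) := by
    intro δ hδ
    set G := matFun (fun x => (√x + δ)⁻¹) N with hG
    set H := matFun (fun x => √(√x + δ)) N with hH
    set H' := matFun (fun x => (√(√x + δ))⁻¹) N with hH'
    have hHh : Hᴴ = H := matFun_herm _ hN.1
    have hH'h : H'ᴴ = H' := matFun_herm _ hN.1
    have hHH : H * H = S + (δ : ℂ) • 1 := by
      rw [hH, matFun_mul _ _ hN.1, hS, msqrt, ← matFun_const δ hN.1, matFun_add _ _ hN.1]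
      refine matFun_congr hN fun x hx => Real.mul_self_sqrt (by positivity)
    have hHH' : H * H' = 1 := by
      rw [hH, hH', matFun_mul _ _ hN.1, matFun_congr (g := fun _ => 1) hN, matFun_const 1 hN.1]
      · simp
      · intro x hx
        have : 0 < √(√x + δ) := by positivity
        field_simp
    have hG' : H' * H' = G := by
      rw [hG, hH', matFun_mul _ _ hN.1]
      refine matFun_congr hN fun x hx => ?_
      rw [← mul_inv, Real.mul_self_sqrt (by positivity)]
    have step : ∀ η : ℝ, 0 < η → 2 * rtr X ≤
        rtr (P * ((R + (η : ℂ) • 1) * (G * (R + (η : ℂ) • 1)))) + rtr (S + (δ : ℂ) • 1) := by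
      intro η hη
      set E := R + (η : ℂ) • (1 : Matrix n n ℂ) with hE
      have hE1 : E = matFun (fun x => √x + η) Q := by
        rw [hE, hR, msqrt, ← matFun_const η hQ.1, matFun_add _ _ hQ.1]
      set E' := matFun (fun x => (√x + η)⁻¹) Q with hE'
      have hEh : Eᴴ = E := by rw [hE1]; exact matFun_herm _ hQ.1
      have hE'h : E'ᴴ = E' := matFun_herm _ hQ.1
      have hEE : E' * E = 1 := by
        rw [hE', hE1, matFun_mul _ _ hQ.1, matFun_congr (g := fun _ => 1) hQ, matFun_const 1 hQ.1]
        · simp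
        · intro x hx
          have : 0 < √x + η := by positivity
          field_simp
      have hle : ((1 : Matrix n n ℂ) - E' * Q * E').PosSemidef := by
        have : (1 : Matrix n n ℂ) - E' * Q * E' =
            matFun (fun x => 1 - (√x + η)⁻¹ * x * (√x + η)⁻¹) Q := by
          rw [← matFun_sub (fun _ => 1) _ hQ.1, matFun_const 1 hQ.1, ← matFun_mul _ _ hQ.1,
            ← matFun_mul _ (fun x => x) hQ.1, matFun_id hQ.1]
          simp [hE']
        rw [this]
        refine matFun_psd hQ fun x hx => ?_
        have h0 : 0 < √x + η := by positivity
        have h1 : (√x + η)⁻¹ * x * (√x + η)⁻¹ = x / (√x + η)^2 := by field_simp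
        rw [h1, sub_nonneg, div_le_one (by positivity)]
        nlinarith [Real.sq_sqrt hx, Real.sqrt_nonneg x]
      have hb := block_pairing h (E * H') (E' * H)
      have e1 : E' * H * (E * H')ᴴ = 1 := by
        rw [conjTranspose_mul, hH'h, hEh, Matrix.mul_assoc, ← Matrix.mul_assoc H, hHH',
          Matrix.one_mul, hEE]
      have e2 : E * H' * (E * H')ᴴ = E * (G * E) := by
        rw [conjTranspose_mul, hH'h, hEh, ← hG']
        simp only [Matrix.mul_assoc]
      have e3 : rtr (Q * (E' * H * (E' * H)ᴴ)) = rtr ((E' * Q * E') * (S + (δ : ℂ) • 1)) := by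
        rw [conjTranspose_mul, hHh, hE'h, ← hHH,
          show Q * (E' * H * (H * E')) = (Q * E' * (H * H)) * E' by simp only [Matrix.mul_assoc],
          rtr_comm]
        simp only [Matrix.mul_assoc]
      have hSd : (S + (δ : ℂ) • (1 : Matrix n n ℂ)).PosSemidef :=
        hSp.add (PosSemidef.one.smul (by exact_mod_cast hδ.le))
      have hl := rtr_mul_nonneg hle hSd
      rw [Matrix.sub_mul, Matrix.one_mul, rtr_sub] at hl
      rw [e1, e2, e3, Matrix.mul_one] at hb
      linarith
    have lim : 2 * rtr X ≤
        rtr (P * ((R + ((0 : ℝ) : ℂ) • 1) * (G * (R + ((0 : ℝ) : ℂ) • 1)))) +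
          rtr (S + (δ : ℂ) • 1) := by
      have hc : Continuous fun η : ℝ =>
          rtr (P * ((R + (η : ℂ) • 1) * (G * (R + (η : ℂ) • 1)))) + rtr (S + (δ : ℂ) • 1) := by
        unfold rtr
        fun_prop
      refine ge_of_tendsto (hc.continuousWithinAt (s := Set.Ioi 0) (x := 0)).tendsto ?_
      filter_upwards [self_mem_nhdsWithin] with η hη using step η hη
    have e4 : rtr (P * ((R + ((0 : ℝ) : ℂ) • 1) * (G * (R + ((0 : ℝ) : ℂ) • 1)))) =
        rtr (N * G) := by
      simp only [Complex.ofReal_zero, zero_smul, add_zero]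
      rw [hNdef, rtr_comm P]
      simp only [Matrix.mul_assoc]
      rw [rtr_comm R]
      simp only [Matrix.mul_assoc]
      rw [rtr_comm G]
      simp only [Matrix.mul_assoc]
    have e5 : (S - N * G).PosSemidef := by
      have : S - N * G = matFun (fun x => √x - x * (√x + δ)⁻¹) N := by
        rw [← matFun_sub _ _ hN.1, ← matFun_mul (fun x => x) _ hN.1, matFun_id hN.1]
        rfl
      rw [this]
      refine matFun_psd hN fun x hx => ?_
      have h0 : 0 < √x + δ := by positivity
      rw [sub_nonneg, ← div_eq_mul_inv, div_le_iff₀ h0]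
      nlinarith [Real.sq_sqrt hx, Real.sqrt_nonneg x]
    have e6 := rtr_nonneg e5
    rw [rtr_sub] at e6
    rw [e4, rtr_add, rtr_smul] at lim
    linarith
  have hc : Continuous fun δ : ℝ => 2 * rtr S + δ * rtr (1 : Matrix n n ℂ) := by fun_prop
  have := ge_of_tendsto (hc.continuousWithinAt (s := Set.Ioi 0) (x := 0)).tendsto
    (by filter_upwards [self_mem_nhdsWithin] with δ hδ using key δ hδ)
  simp only [zero_mul, add_zero] at this
  linarith

end helpers
section sep
set_option linter.unusedSectionVars false
variable {n : Type} [Fintype n] [DecidableEq n]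

lemma isClosed_psd (m : Type) [Fintype m] : IsClosed {Z : Matrix m m ℂ | Z.PosSemidef} := by
  have : {Z : Matrix m m ℂ | Z.PosSemidef} =
      {Z | Zᴴ = Z} ∩ ⋂ x : m → ℂ, {Z | 0 ≤ star x ⬝ᵥ (Z *ᵥ x)} := by
    ext Z
    simp [posSemidef_iff_dotProduct_mulVec, IsHermitian]
  rw [this]
  refine IsClosed.inter (isClosed_eq (by fun_prop) (by fun_prop)) (isClosed_iInter fun x => ?_)
  exact isClosed_le (by fun_prop) (by fun_prop)

lemma psd_entry_bound {m : Type} [Fintype m] {Z : Matrix m m ℂ} (hZ : Z.PosSemidef)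
    (i j : m) : ‖Z i j‖ ≤ Z.trace.re := by
  have h := (hZ.submatrix ![i, j]).det_nonneg
  rw [det_fin_two] at h
  simp only [submatrix_apply, cons_val_zero, cons_val_one] at h
  have hd : ∀ k, 0 ≤ (Z k k).re ∧ (Z k k).im = 0 := fun k => by
    have := Complex.le_def.1 (hZ.diag_nonneg (i := k))
    exact ⟨this.1, this.2.symm⟩
  have hle : ∀ k, (Z k k).re ≤ Z.trace.re := fun k => by
    rw [trace, Complex.re_sum]
    exact Finset.single_le_sum (f := fun k => (Z k k).re) (fun k _ => (hd k).1)
      (Finset.mem_univ k)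
  have hji : Z j i = star (Z i j) := (hZ.1.apply j i).symm
  have h1 := (Complex.le_def.1 h).1
  rw [hji] at h1
  simp [(hd i).2, (hd j).2] at h1
  have h2 : ‖Z i j‖ ^ 2 = (Z i j).re * (Z i j).re + (Z i j).im * (Z i j).im := by
    rw [Complex.sq_norm, Complex.normSq_apply]
  have h0 : 0 ≤ Z.trace.re := (hd i).1.trans (hle i)
  refine le_of_sq_le_sq ?_ h0
  nlinarith [hle i, hle j, (hd i).1, (hd j).1]

/-- States near `ρ`, in semidefinite form. -/
def KSet (ρ : Matrix n n ℂ) (c : ℝ) : Set (Matrix n n ℂ) :=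
  {τ | ∃ X, (fromBlocks ρ X Xᴴ τ).PosSemidef ∧ τ.trace = 1 ∧ c ≤ rtr X}

lemma KSet_convex (ρ : Matrix n n ℂ) (c : ℝ) : Convex ℝ (KSet ρ c) := by
  rintro τ₁ ⟨X₁, h₁, t₁, c₁⟩ τ₂ ⟨X₂, h₂, t₂, c₂⟩ a b ha hb hab
  refine ⟨(a : ℂ) • X₁ + (b : ℂ) • X₂, ?_, ?_, ?_⟩
  · have h := (h₁.smul (a := (a : ℂ)) (by exact_mod_cast ha)).add
      (h₂.smul (a := (b : ℂ)) (by exact_mod_cast hb))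
    rw [fromBlocks_smul, fromBlocks_smul, fromBlocks_add, ← add_smul] at h
    have e : (a : ℂ) + b = 1 := by exact_mod_cast hab
    rw [e, one_smul] at h
    convert h using 2
    · simp
    · rfl
  · have e : (a : ℂ) + b = 1 := by exact_mod_cast hab
    simp [t₁, t₂, e]
  · rw [rtr_add, rtr_smul, rtr_smul]
    calc c = a * c + b * c := by rw [← add_mul, hab, one_mul]
      _ ≤ _ := add_le_add (mul_le_mul_of_nonneg_left c₁ ha) (mul_le_mul_of_nonneg_left c₂ hb)

lemma KSet_compact {ρ : Matrix n n ℂ} (hρ : IsState ρ) (c : ℝ) : IsCompact (KSet ρ c) := by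
  let S : Set (Matrix (n ⊕ n) (n ⊕ n) ℂ) :=
    {Z | Z.PosSemidef} ∩ ({Z | Z.toBlocks₁₁ = ρ} ∩ ({Z | Z.toBlocks₂₂.trace = 1} ∩
      {Z | c ≤ rtr Z.toBlocks₁₂}))
  have c11 : Continuous fun Z : Matrix (n ⊕ n) (n ⊕ n) ℂ => Z.toBlocks₁₁ := by
    unfold toBlocks₁₁; fun_prop
  have c12 : Continuous fun Z : Matrix (n ⊕ n) (n ⊕ n) ℂ => Z.toBlocks₁₂ := by
    unfold toBlocks₁₂; fun_prop
  have c22 : Continuous fun Z : Matrix (n ⊕ n) (n ⊕ n) ℂ => Z.toBlocks₂₂ := by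
    unfold toBlocks₂₂; fun_prop
  have hS : IsClosed S := by
    refine (isClosed_psd _).inter ((isClosed_eq c11 continuous_const).inter
      ((isClosed_eq c22.matrix_trace continuous_const).inter (isClosed_le continuous_const ?_)))
    unfold rtr
    exact Complex.continuous_re.comp c12.matrix_trace
  have hK : IsCompact S := by
    have hB : IsCompact (Set.univ.pi fun _ : n ⊕ n => Set.univ.pi fun _ : n ⊕ n =>
        Metric.closedBall (0 : ℂ) 2) :=
      isCompact_univ_pi fun _ => isCompact_univ_pi fun _ => isCompact_closedBall _ _
    refine hB.of_isClosed_subset hS ?_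
    rintro (Z : Matrix (n ⊕ n) (n ⊕ n) ℂ) ⟨h1, h2, h3, -⟩ i - j -
    have := psd_entry_bound h1 i j
    have ht : Matrix.trace Z = 2 := by
      have h4 : Matrix.trace Z = Z.toBlocks₁₁.trace + Z.toBlocks₂₂.trace := by
        simp [Matrix.trace, Fintype.sum_sum_type, toBlocks₁₁, toBlocks₂₂]
      simp only [Set.mem_ofPred_eq] at h2 h3
      rw [h4, h2, h3, hρ.2]; norm_num
    rw [ht] at this
    simpa using this
  have : KSet ρ c = (fun Z : Matrix (n ⊕ n) (n ⊕ n) ℂ => Z.toBlocks₂₂) '' S := by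
    ext τ
    constructor
    · rintro ⟨X, h1, h2, h3⟩
      exact ⟨fromBlocks ρ X Xᴴ τ, ⟨h1, by simp, by simpa using h2, by simpa using h3⟩, by simp⟩
    · rintro ⟨Z, ⟨h1, h2, h3, h4⟩, rfl⟩
      refine ⟨Z.toBlocks₁₂, ?_, h3, h4⟩
      simp only [Set.mem_ofPred_eq] at h1 h2
      have e : Z.toBlocks₁₂ᴴ = Z.toBlocks₂₁ := by
        ext i j
        exact h1.1.apply (Sum.inr i) (Sum.inl j)
      rw [e, ← h2, fromBlocks_toBlocks]
      exact h1
  rw [this]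
  exact hK.image c22

/-- Riesz representation of a real functional, on Hermitian matrices. -/
lemma exists_rep (f : Matrix n n ℂ →ₗ[ℝ] ℝ) :
    ∃ N : Matrix n n ℂ, N.IsHermitian ∧ ∀ A : Matrix n n ℂ, A.IsHermitian → rtr (N * A) = f A := by
  let M : Matrix n n ℂ := Matrix.of fun j i =>
    (⟨f (Matrix.single i j 1), - f (Matrix.single i j Complex.I)⟩ : ℂ)
  have hM : ∀ A, rtr (M * A) = f A := by
    intro A
    have hA : A = ∑ i, ∑ j, ((A i j).re • Matrix.single i j (1 : ℂ) +
        (A i j).im • Matrix.single i j Complex.I) := by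
      conv_lhs => rw [matrix_eq_sum_single A]
      refine Finset.sum_congr rfl fun i _ => Finset.sum_congr rfl fun j _ => ?_
      rw [smul_single, smul_single, ← single_add]
      congr 1
      simp [Complex.re_add_im]
    conv_rhs => rw [hA]
    simp only [map_sum, map_add, map_smul, smul_eq_mul]
    simp only [rtr, trace, diag, Matrix.mul_apply, Complex.re_sum, M, Matrix.of_apply,
      Complex.mul_re]
    rw [Finset.sum_comm]
    refine Finset.sum_congr rfl fun i _ => Finset.sum_congr rfl fun j _ => ?_
    ring
  refine ⟨((1 / 2 : ℝ) : ℂ) • (M + Mᴴ), ?_, fun A hA => ?_⟩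
  · rw [IsHermitian, conjTranspose_smul, conjTranspose_add, conjTranspose_conjTranspose, add_comm]
    simp
  · have h : rtr (Mᴴ * A) = rtr (M * A) := by
      rw [← rtr_conjT (M * A), conjTranspose_mul, hA.eq, rtr_comm]
    rw [Matrix.smul_mul, rtr_smul, Matrix.add_mul, rtr_add, h, hM]
    ring

lemma psd_of_rtr {N : Matrix n n ℂ} (hN : N.IsHermitian)
    (h : ∀ A : Matrix n n ℂ, A.PosSemidef → 0 ≤ rtr (N * A)) : N.PosSemidef := by
  refine PosSemidef.of_dotProduct_mulVec_nonneg hN fun x => ?_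
  have h1 := h _ (posSemidef_vecMulVec_self_star x)
  rw [rtr, mul_vecMulVec, trace_vecMulVec, dotProduct_comm] at h1
  rw [Complex.le_def]
  exact ⟨h1, (hN.im_star_dotProduct_mulVec_self x).symm⟩

/-- The dual step: a good state for every dual witness. -/
lemma dual_step {ρ σ N : Matrix n n ℂ} (hρ : IsState ρ) (hσ : IsState σ) (hN : N.PosSemidef)
    {e β w : ℝ} (he : e < 1) (hβ : 0 < β)
    (hT : ∀ T : Matrix n n ℂ, T.PosSemidef → (1 - T).PosSemidef → rtr (T * σ) < β →
      rtr (T * ρ) < e)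
    (hw : β⁻¹ * rtr (N * σ) < w) :
    ∃ τ ∈ KSet ρ (√(1 - e)), rtr (N * τ) ≤ w := by
  have hs : 0 ≤ rtr (N * σ) := rtr_mul_nonneg hN hσ.1
  have hw0 : 0 < w := lt_of_le_of_lt (by positivity) hw
  set T := matFun (fun x => if w ≤ x then 1 else 0) N with hTd
  set Q := matFun (fun x => if w ≤ x then 0 else 1) N with hQd
  have hTQ : 1 - T = Q := by
    have : (1 : Matrix n n ℂ) = matFun (fun _ => 1) N := by rw [matFun_const _ hN.1]; simp
    rw [this, hTd, hQd, matFun_sub _ _ hN.1]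
    congr 1; ext x; split_ifs <;> simp
  have hTp : T.PosSemidef := matFun_psd hN fun x _ => by split_ifs <;> simp
  have hQp : Q.PosSemidef := matFun_psd hN fun x _ => by split_ifs <;> simp
  have hQQ : Q * Q = Q := by
    rw [hQd, matFun_mul _ _ hN.1]
    congr 1; ext x; split_ifs <;> simp
  have h1 : (N - (w : ℂ) • T).PosSemidef := by
    have : N - (w : ℂ) • T = matFun (fun x => x - w * (if w ≤ x then 1 else 0)) N := by
      rw [← matFun_sub (fun x => x) _ hN.1, matFun_id hN.1, matFun_smul _ _ hN.1]
    rw [this]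
    refine matFun_psd hN fun x hx => ?_
    split_ifs with h <;> simp [h, hx]
  have h2 : ((w : ℂ) • Q - Q * N * Q).PosSemidef := by
    have : (w : ℂ) • Q - Q * N * Q = matFun (fun x => w * (if w ≤ x then 0 else 1) -
        (if w ≤ x then 0 else 1) * x * (if w ≤ x then 0 else 1)) N := by
      rw [← matFun_sub _ _ hN.1, matFun_smul _ _ hN.1, ← matFun_mul _ _ hN.1,
        ← matFun_mul _ (fun x => x) hN.1, matFun_id hN.1]
    rw [this]
    refine matFun_psd hN fun x hx => ?_
    split_ifs with h
    · simp
    · simp; linarith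
  have hTσ : rtr (T * σ) < β := by
    have := rtr_mul_nonneg h1 hσ.1
    rw [Matrix.sub_mul, rtr_sub, Matrix.smul_mul, rtr_smul] at this
    have hw' : rtr (N * σ) < β * w := by
      rwa [inv_mul_lt_iff₀ hβ] at hw
    nlinarith
  have hTρ := hT T hTp (hTQ ▸ hQp) hTσ
  have hr1 : rtr ρ = 1 := by simp [rtr, hρ.2]
  have ht : 1 - e < rtr (Q * ρ) := by
    rw [← hTQ, Matrix.sub_mul, rtr_sub, Matrix.one_mul, hr1]
    linarith
  set t := rtr (Q * ρ) with htd
  have ht0 : 0 < t := by linarith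
  have hQh : Qᴴ = Q := matFun_herm _ hN.1
  have hst : 0 < √t := Real.sqrt_pos.2 ht0
  have htr : (Q * ρ * Q).trace = (t : ℂ) := by
    have hp : (Q * ρ * Q).PosSemidef := by
      have := hρ.1.mul_mul_conjTranspose_same Q
      rwa [hQh] at this
    have h0 := Complex.le_def.1 hp.trace_nonneg
    apply Complex.ext
    · rw [Matrix.trace_mul_comm, ← Matrix.mul_assoc, hQQ]; rfl
    · simpa using h0.2.symm
  refine ⟨((t⁻¹ : ℝ) : ℂ) • (Q * ρ * Q), ⟨(((√t)⁻¹ : ℝ) : ℂ) • (ρ * Q), ?_, ?_, ?_⟩, ?_⟩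
  · have := hρ.1.mul_mul_conjTranspose_same (fromRows (1 : Matrix n n ℂ) ((((√t)⁻¹ : ℝ) : ℂ) • Q))
    rw [conjTranspose_fromRows_eq_fromCols_conjTranspose, fromRows_mul, fromRows_mul_fromCols] at this
    convert this using 2
    · simp
    · simp [hQh]
    · simp [hQh, hρ.1.1.eq]
    · have : t⁻¹ = (√t)⁻¹ * (√t)⁻¹ := by
        rw [← mul_inv, Real.mul_self_sqrt ht0.le]
      rw [this]
      simp [hQh, smul_smul]
  · rw [trace_smul, htr]
    have : (t : ℂ) ≠ 0 := by exact_mod_cast ht0.ne'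
    simp [this]
  · rw [rtr_smul, rtr_comm ρ Q, ← htd, ← div_eq_inv_mul, Real.div_sqrt]
    exact Real.sqrt_le_sqrt ht.le
  · rw [Matrix.mul_smul, rtr_smul, inv_mul_le_iff₀ ht0]
    have := rtr_mul_nonneg h2 hρ.1
    rw [Matrix.sub_mul, rtr_sub, Matrix.smul_mul, rtr_smul, ← htd] at this
    have e1 : rtr (N * (Q * ρ * Q)) = rtr (Q * N * Q * ρ) := by
      rw [show N * (Q * ρ * Q) = (N * Q * ρ) * Q by simp only [Matrix.mul_assoc], rtr_comm]
      simp only [Matrix.mul_assoc]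
    rw [e1]
    linarith

lemma exists_near {ρ σ : Matrix n n ℂ} (hρ : IsState ρ) (hσ : IsState σ)
    {e β : ℝ} (he : e < 1) (hβ : 0 < β)
    (hT : ∀ T : Matrix n n ℂ, T.PosSemidef → (1 - T).PosSemidef → rtr (T * σ) < β →
      rtr (T * ρ) < e) :
    ∃ τ ∈ KSet ρ (√(1 - e)), (((β⁻¹ : ℝ) : ℂ) • σ - τ).PosSemidef := by
  by_contra hcon
  push Not at hcon
  set C : Set (Matrix n n ℂ) := {τ | (((β⁻¹ : ℝ) : ℂ) • σ - τ).PosSemidef} with hC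
  have hCc : IsClosed C := (isClosed_psd n).preimage (f := fun τ => ((β⁻¹ : ℝ) : ℂ) • σ - τ)
    (by fun_prop)
  have hCx : Convex ℝ C := by
    intro x hx y hy a b ha hb hab
    have h := (PosSemidef.smul hx (a := (a : ℂ)) (by exact_mod_cast ha)).add
      (PosSemidef.smul hy (a := (b : ℂ)) (by exact_mod_cast hb))
    have e : (b : ℂ) = 1 - a := by
      have : (a : ℂ) + b = 1 := by exact_mod_cast hab
      linear_combination this
    show PosSemidef (_ - _)
    convert h using 1
    ext i j
    simp [e]
    ring
  have hdisj : Disjoint (KSet ρ (√(1 - e))) C :=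
    Set.disjoint_left.2 fun τ h1 h2 => hcon τ h1 h2
  have : LocallyConvexSpace ℝ (Matrix n n ℂ) :=
    inferInstanceAs (LocallyConvexSpace ℝ (n → n → ℂ))
  obtain ⟨f, u, v, hu, huv, hv⟩ := geometric_hahn_banach_compact_closed
    (KSet_convex ρ _) (KSet_compact hρ _) hCx hCc hdisj
  obtain ⟨N, hNh, hNf⟩ := exists_rep (-f.toLinearMap)
  have hNf' : ∀ A : Matrix n n ℂ, A.IsHermitian → rtr (N * A) = - f A := hNf
  have hNp : N.PosSemidef := by
    refine psd_of_rtr hNh fun A hA => ?_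
    by_contra hneg
    push Not at hneg
    have hk : ∀ k : ℝ, 0 ≤ k → v < f (((β⁻¹ : ℝ) : ℂ) • σ) + k * rtr (N * A) := by
      intro k hk
      have hm : ((β⁻¹ : ℝ) : ℂ) • σ - k • A ∈ C := by
        show PosSemidef (_ - (_ - _))
        rw [sub_sub_cancel]
        have := hA.smul (a := (k : ℂ)) (by exact_mod_cast hk)
        exact this
      have := hv _ hm
      rw [map_sub, map_smul f k A, smul_eq_mul] at this
      rw [hNf' A hA.1]
      linarith
    have h0 := hk 0 le_rfl
    set F := f (((β⁻¹ : ℝ) : ℂ) • σ)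
    have h1 := hk ((F - v) / (- rtr (N * A))) (div_nonneg (by linarith) (by linarith))
    rw [div_mul_eq_mul_div, mul_div_assoc, div_neg, div_self hneg.ne] at h1
    linarith
  have hσh : (((β⁻¹ : ℝ) : ℂ) • σ).IsHermitian :=
    (hσ.1.smul (a := ((β⁻¹ : ℝ) : ℂ)) (by exact_mod_cast (inv_pos.2 hβ).le)).1
  have hvσ := hv (((β⁻¹ : ℝ) : ℂ) • σ) (by show PosSemidef (_ - _); rw [sub_self]; exact .zero)
  have hlt : β⁻¹ * rtr (N * σ) < -u := by
    rw [← rtr_smul, ← Matrix.mul_smul, hNf' _ hσh]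
    linarith
  obtain ⟨τ, hτK, hτ⟩ := dual_step hρ hσ hNp he hβ hT hlt
  have hτh : τ.IsHermitian := by
    obtain ⟨X, hX, -⟩ := hτK
    exact (hX.submatrix Sum.inr).1
  rw [hNf' _ hτh] at hτ
  linarith [hu τ hτK]

end sep

/-- Smoothed max-relative entropy vs hypothesis testing divergence. -/
theorem dMaxSmooth_le_dH {d : ℕ} (ρ σ : Matrix (Fin d) (Fin d) ℂ)
    (hρ : IsState ρ) (hσ : IsState σ) (ε : ℝ) (hε : 0 < ε ∧ ε < 1) :
    dMaxSmooth ε ρ σ ≤ dH (1 - ε ^ 2) ρ σ - ((Real.logb 2 (1 - ε ^ 2) : ℝ) : EReal) := by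
  obtain ⟨h0, h1⟩ := hε
  have he : ε ^ 2 < 1 := by nlinarith
  rw [dH]
  set S : Set ℝ := {x : ℝ | ∃ T : Matrix (Fin d) (Fin d) ℂ,
      T.PosSemidef ∧ ((1 : Matrix (Fin d) (Fin d) ℂ) - T).PosSemidef ∧
      1 - (1 - ε ^ 2) ≤ rtr (T * ρ) ∧ x = rtr (T * σ)} with hS
  have hbdd : BddBelow S := ⟨0, by
    rintro x ⟨T, hT, -, -, rfl⟩
    exact rtr_mul_nonneg hT hσ.1⟩
  set β := sInf S with hβd
  by_cases hβ : β ≤ 0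
  · simp [elog, hβ]
  push Not at hβ
  rw [elog, if_neg (not_le.2 hβ)]
  have hT : ∀ T : Matrix (Fin d) (Fin d) ℂ, T.PosSemidef → (1 - T).PosSemidef →
      rtr (T * σ) < β → rtr (T * ρ) < ε ^ 2 := by
    intro T hT1 hT2 hT3
    by_contra hc
    push Not at hc
    exact absurd (csInf_le hbdd ⟨T, hT1, hT2, by linarith, rfl⟩) (not_le.2 hT3)
  obtain ⟨τ, ⟨X, hX, ht, hc⟩, hle⟩ := exists_near hρ hσ he hβ hT
  have hτ : τ.PosSemidef := hX.submatrix Sum.inr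
  have hfid : 1 - ε ^ 2 ≤ fidelity ρ τ := by
    have h2 := hc.trans (rtr_le_of_block hX hρ.1 hτ)
    rw [fidelity]
    calc 1 - ε ^ 2 = √(1 - ε ^ 2) ^ 2 := (Real.sq_sqrt (by linarith)).symm
      _ ≤ _ := by gcongr
  have hsd : sineDist ρ τ ≤ ε := by
    rw [sineDist]
    exact Real.sqrt_le_iff.2 ⟨h0.le, by linarith⟩
  calc dMaxSmooth ε ρ σ ≤ dMax τ σ := iInf₂_le τ ⟨⟨hτ, ht⟩, hsd⟩
    _ ≤ ((- Real.logb 2 β : ℝ) : EReal) := by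
      refine sInf_le ⟨_, rfl, ?_⟩
      rw [loewnerLE, Real.rpow_neg (by norm_num), Real.rpow_logb (by norm_num) (by norm_num) hβ]
      exact hle
    _ ≤ ((- Real.logb 2 β - Real.logb 2 (1 - ε ^ 2) : ℝ) : EReal) := by
      have : Real.logb 2 (1 - ε ^ 2) ≤ 0 :=
        Real.logb_nonpos (by norm_num) (by linarith) (by nlinarith)
      exact_mod_cast (by linarith)
    _ = _ := by push_cast; rfl

end QCD
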